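/- Let m, n ≥ 1 and let (L_ε)_{ε∈(0,1]} be a moderate net of linear maps L_ε : 𝓢(ℝ^n) → C^∞(ℝ^m), each L_ε being continuous into O_M(ℝ^m). Let ψ be a mollifier on ℝ^n and φ a mollifier on ℝ^m, and for ε ∈ (0,1] and y ∈ ℝ^n let ψ_{ε,y} ∈ 𝓢(ℝ^n) be given by ψ_{ε,y}(v) = ψ_ε(y−v). Define H_ε : ℝ^{m+n} → ℂ by H_ε(x,y) = ∫_{ℝ^m} L_ε(ψ_{ε,y})(x−u) φ_ε(u) du. Then each H_ε is a well-defined smooth function of temperate growth on ℝ^{m+n}, and the net (H_ε)_{ε∈(0,1]} belongs to E_τ(ℝ^{m+n}). -/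

import Mathlib

open MeasureTheory Filter

noncomputable def mu {E : Type*} [NormedAddCommGroup E] [NormedSpace ℝ E]
    (r : ℤ) (l : ℕ) (f : E → ℂ) : ENNReal :=
  ⨆ (x : E) (i : ℕ) (_ : i ≤ l),
    ENNReal.ofReal ((1 + ‖x‖) ^ r * ‖iteratedFDeriv ℝ i f x‖)

def IsOEps (g : ℝ → ENNReal) (h : ℝ → ℝ) : Prop :=
  ∃ C > (0:ℝ), ∃ η > (0:ℝ), ∀ ε : ℝ, 0 < ε → ε ≤ η → g ε ≤ ENNReal.ofReal (C * h ε)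

def SchwartzLike {E : Type*} [NormedAddCommGroup E] [NormedSpace ℝ E] (f : E → ℂ) : Prop :=
  ContDiff ℝ (⊤ : ℕ∞) f ∧ ∀ q l : ℕ, mu (q : ℤ) l f < ⊤

def TemperateGrowth' {E : Type*} [NormedAddCommGroup E] [NormedSpace ℝ E] (f : E → ℂ) : Prop :=
  ContDiff ℝ (⊤ : ℕ∞) f ∧ ∀ l : ℕ, ∃ q : ℕ, mu (-(q:ℤ)) l f < ⊤

def IsESNet {E : Type*} [NormedAddCommGroup E] [NormedSpace ℝ E] (f : ℝ → E → ℂ) : Prop :=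
  (∀ ε ∈ Set.Ioc (0:ℝ) 1, SchwartzLike (f ε)) ∧
  ∀ q l : ℕ, ∃ N : ℕ, IsOEps (fun ε => mu (q:ℤ) l (f ε)) (fun ε => ε ^ (-(N:ℤ)))

def IsNSNet {E : Type*} [NormedAddCommGroup E] [NormedSpace ℝ E] (f : ℝ → E → ℂ) : Prop :=
  (∀ ε ∈ Set.Ioc (0:ℝ) 1, SchwartzLike (f ε)) ∧
  ∀ q l p : ℕ, IsOEps (fun ε => mu (q:ℤ) l (f ε)) (fun ε => ε ^ p)

def IsEtauNet {E : Type*} [NormedAddCommGroup E] [NormedSpace ℝ E] (f : ℝ → E → ℂ) : Prop :=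
  (∀ ε ∈ Set.Ioc (0:ℝ) 1, TemperateGrowth' (f ε)) ∧
  ∀ l : ℕ, ∃ q N : ℕ, IsOEps (fun ε => mu (-(q:ℤ)) l (f ε)) (fun ε => ε ^ (-(N:ℤ)))

def IsNtauNet {E : Type*} [NormedAddCommGroup E] [NormedSpace ℝ E] (f : ℝ → E → ℂ) : Prop :=
  (∀ ε ∈ Set.Ioc (0:ℝ) 1, TemperateGrowth' (f ε)) ∧
  ∀ l : ℕ, ∃ q : ℕ, ∀ p : ℕ, IsOEps (fun ε => mu (-(q:ℤ)) l (f ε)) (fun ε => ε ^ p)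

noncomputable def scaled {d : ℕ} (ρ : (Fin d → ℝ) → ℂ) (t : ℝ) (x : Fin d → ℝ) : ℂ :=
  ((t ^ (-(d:ℤ)) : ℝ) : ℂ) * ρ (t⁻¹ • x)

def IsMollifier {d : ℕ} (ρ : SchwartzMap (Fin d → ℝ) ℂ) : Prop :=
  (∫ x : Fin d → ℝ, ρ x) = 1 ∧
  ∀ α : Fin d → ℕ, α ≠ 0 → (∫ x : Fin d → ℝ, (∏ j, (x j : ℂ) ^ (α j)) * ρ x) = 0

def MemLa (a : ℝ) (N : ℕ → ℝ) : Prop :=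
  (∀ l, 0 ≤ N l) ∧
  ((a = 0 ∧ Filter.Tendsto (fun l : ℕ => N l / (l:ℝ)) Filter.atTop (nhds 0)) ∨
   (0 < a ∧ Filter.limsup (fun l : ℕ => N l / (l:ℝ)) Filter.atTop < a))

def IsESLNet {E : Type*} [NormedAddCommGroup E] [NormedSpace ℝ E]
    (a : ℝ) (f : ℝ → E → ℂ) : Prop :=
  (∀ ε ∈ Set.Ioc (0:ℝ) 1, SchwartzLike (f ε)) ∧
  ∃ N : ℕ → ℝ, MemLa a N ∧
    ∀ q l : ℕ, IsOEps (fun ε => mu (q:ℤ) l (f ε)) (fun ε => ε ^ (-(N l)))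

def IsEtauLNet {E : Type*} [NormedAddCommGroup E] [NormedSpace ℝ E]
    (c : ℝ) (f : ℝ → E → ℂ) : Prop :=
  (∀ ε ∈ Set.Ioc (0:ℝ) 1, TemperateGrowth' (f ε)) ∧
  ∃ N : ℕ → ℝ, MemLa c N ∧ ∃ q : ℕ, ∀ l : ℕ,
    IsOEps (fun ε => mu (-(q:ℤ)) l (f ε)) (fun ε => ε ^ (-(N l)))

def IsESinfNet {E : Type*} [NormedAddCommGroup E] [NormedSpace ℝ E] (f : ℝ → E → ℂ) : Prop :=
  (∀ ε ∈ Set.Ioc (0:ℝ) 1, SchwartzLike (f ε)) ∧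
  ∃ N : ℕ, ∀ q l : ℕ, IsOEps (fun ε => mu (q:ℤ) l (f ε)) (fun ε => ε ^ (-(N:ℤ)))

def ModerateNetMaps (m n : ℕ)
    (L : ℝ → SchwartzMap (Fin n → ℝ) ℂ → ((Fin m → ℝ) → ℂ)) : Prop :=
  (∀ ε ∈ Set.Ioc (0:ℝ) 1, ∀ f, TemperateGrowth' (L ε f)) ∧
  ∀ l : ℕ, ∃ C : ℝ → ℝ, (∀ ε, 0 ≤ C ε) ∧
    (∃ N : ℕ, ∃ C₀ > (0:ℝ), ∃ η > (0:ℝ), ∀ ε : ℝ, 0 < ε → ε ≤ η → C ε ≤ C₀ * ε ^ (-(N:ℤ))) ∧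
    ∃ p q l' : ℕ, ∃ η > (0:ℝ), ∀ ε : ℝ, 0 < ε → ε ≤ η →
      ∀ f : SchwartzMap (Fin n → ℝ) ℂ,
        mu (-(p:ℤ)) l (L ε f) ≤ ENNReal.ofReal (C ε) * mu (q:ℤ) l' ⇑f

def NegligibleNetMaps (m n : ℕ)
    (L : ℝ → SchwartzMap (Fin n → ℝ) ℂ → ((Fin m → ℝ) → ℂ)) : Prop :=
  (∀ ε ∈ Set.Ioc (0:ℝ) 1, ∀ f, TemperateGrowth' (L ε f)) ∧
  ∀ l : ℕ, ∃ C : ℝ → ℝ, (∀ ε, 0 ≤ C ε) ∧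
    (∀ p' : ℕ, ∃ C₀ > (0:ℝ), ∃ η > (0:ℝ), ∀ ε : ℝ, 0 < ε → ε ≤ η → C ε ≤ C₀ * ε ^ p') ∧
    ∃ p q l' : ℕ, ∃ η > (0:ℝ), ∀ ε : ℝ, 0 < ε → ε ≤ η →
      ∀ f : SchwartzMap (Fin n → ℝ) ℂ,
        mu (-(p:ℤ)) l (L ε f) ≤ ENNReal.ofReal (C ε) * mu (q:ℤ) l' ⇑f

def StronglyModerateWith (m n : ℕ)
    (L : ℝ → SchwartzMap (Fin n → ℝ) ℂ → ((Fin m → ℝ) → ℂ))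
    (lam : ℕ → ℕ) (r : ℕ → ℝ) : Prop :=
  (∀ ε ∈ Set.Ioc (0:ℝ) 1, ∀ f, TemperateGrowth' (L ε f)) ∧
  (∀ l, 0 ≤ r l) ∧
  ∀ l : ℕ, ∃ C ≥ (0:ℝ), ∃ p q : ℕ, ∃ η > (0:ℝ), ∀ ε : ℝ, 0 < ε → ε ≤ η →
    ∀ f : SchwartzMap (Fin n → ℝ) ℂ,
      mu (-(p:ℤ)) l (L ε f) ≤ ENNReal.ofReal (C * ε ^ (-(r l))) * mu (q:ℤ) (lam l) ⇑f

def ContinuousIntoOM (m n : ℕ) (L : SchwartzMap (Fin n → ℝ) ℂ → ((Fin m → ℝ) → ℂ)) : Prop :=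
  ∀ l : ℕ, ∃ C ≥ (0:ℝ), ∃ p q l' : ℕ, ∀ f,
    mu (-(p:ℤ)) l (L f) ≤ ENNReal.ofReal C * mu (q:ℤ) l' ⇑f

noncomputable def muOn {d : ℕ} (Ω : Set (Fin d → ℝ)) (r : ℤ) (l : ℕ)
    (f : (Fin d → ℝ) → ℂ) : ENNReal :=
  ⨆ (x : Ω) (i : ℕ) (_ : i ≤ l),
    ENNReal.ofReal ((1 + ‖(x : Fin d → ℝ)‖) ^ r * ‖iteratedFDerivWithin ℝ i f Ω (x : Fin d → ℝ)‖)

def IsBox {d : ℕ} (Ω : Set (Fin d → ℝ)) : Prop :=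
  ∃ I : Fin d → Set ℝ, (∀ j, IsOpen (I j) ∧ Convex ℝ (I j)) ∧ Ω = Set.univ.pi I

def IsRegularSet (R : Set (ℕ → ℝ)) : Prop :=
  R.Nonempty ∧ (∀ N ∈ R, ∀ n, 0 ≤ N n) ∧
  (∀ N ∈ R, ∀ k : ℕ, ∃ N' ∈ R, ∀ n, N n + k ≤ N' n) ∧
  (∀ N₁ ∈ R, ∀ N₂ ∈ R, ∃ N ∈ R, ∀ n, max (N₁ n) (N₂ n) ≤ N n) ∧
  (∀ N₁ ∈ R, ∀ N₂ ∈ R, ∃ N ∈ R, ∀ l₁ l₂ : ℕ, N₁ l₁ + N₂ l₂ ≤ N (l₁ + l₂))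

def IsESRNet {E : Type*} [NormedAddCommGroup E] [NormedSpace ℝ E]
    (R : Set (ℕ → ℝ)) (f : ℝ → E → ℂ) : Prop :=
  (∀ ε ∈ Set.Ioc (0:ℝ) 1, SchwartzLike (f ε)) ∧
  ∃ N ∈ R, ∀ q l : ℕ, IsOEps (fun ε => mu (q:ℤ) l (f ε)) (fun ε => ε ^ (-(N l)))

def IsEtauRNet {E : Type*} [NormedAddCommGroup E] [NormedSpace ℝ E]
    (R : Set (ℕ → ℝ)) (f : ℝ → E → ℂ) : Prop :=
  (∀ ε ∈ Set.Ioc (0:ℝ) 1, TemperateGrowth' (f ε)) ∧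
  ∃ N ∈ R, ∃ q : ℕ, ∀ l : ℕ,
    IsOEps (fun ε => mu (-(q:ℤ)) l (f ε)) (fun ε => ε ^ (-(N l)))

noncomputable def pderiv' {d : ℕ} (j : Fin d) (f : (Fin d → ℝ) → ℂ) : (Fin d → ℝ) → ℂ :=
  fun x => fderiv ℝ f x (Pi.single j 1)

noncomputable def multiDeriv {d : ℕ} : List (Fin d) → ((Fin d → ℝ) → ℂ) → ((Fin d → ℝ) → ℂ)
  | [], f => f
  | j :: js, f => pderiv' j (multiDeriv js f)

/-!
With `R_y g = g (y - ·)`, substituting `u ↦ x - u` turns `H_ε(x, y)` into the pairing of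
`L_ε (R_y ψ_ε)` with `R_x φ_ε`. Derivatives in `x` and `y` then fall on the Schwartz functions
`ψ_ε` and `φ_ε`, so only the order-zero estimate of `L_ε` matters: after division by
`(1 + |u|)^p` it makes `L_ε` a bounded map into a normed space of bounded continuous functions.
For a linear map `Λ` from `𝓢` into a normed space that is bounded by one seminorm of `𝓢`, the
second-order Taylor estimate in these seminorms shows that `y ↦ Λ (R_y g)` has derivative
`b ↦ Λ (R_y (∂_b g))`, and iterating gives smoothness with polynomially growing derivatives. The
Leibniz rule for the evaluation pairing passes this to `H_ε`, and the negative powers of `ε` coming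
from `L_ε`, `ψ_ε` and `φ_ε` multiply.
-/

section Calculus

open scoped ContDiff

variable {D E F : Type*} [NormedAddCommGroup D] [NormedSpace ℝ D] [NormedAddCommGroup E]
  [NormedSpace ℝ E] [NormedAddCommGroup F] [NormedSpace ℝ F]

theorem iteratedFDeriv_fderiv_apply_const {f : E → F} (hf : ContDiff ℝ ∞ f) (b : E) (i : ℕ) :
    iteratedFDeriv ℝ i (fun y => fderiv ℝ f y b) =
      fun x => fderiv ℝ (iteratedFDeriv ℝ i f) x b := by
  induction i with
  | zero =>
    simp only [iteratedFDeriv_zero_eq_comp, LinearIsometryEquiv.comp_fderiv]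
    rfl
  | succ i ih =>
    ext x m
    have hi : ContDiff ℝ ∞ (iteratedFDeriv ℝ i f) :=
      hf.iteratedFDeriv_right (m := ∞) (i := i) (by norm_cast)
    have hsymm : IsSymmSndFDerivAt ℝ (iteratedFDeriv ℝ i f) x :=
      hi.contDiffAt.isSymmSndFDerivAt (by simpa using WithTop.coe_le_coe.2 (le_top : (2 : ℕ∞) ≤ ⊤))
    have hd : DifferentiableAt ℝ (fderiv ℝ (iteratedFDeriv ℝ i f)) x :=
      (hi.fderiv_right (m := ∞) (by simp)).differentiable (by simp) x
    have hd' : DifferentiableAt ℝ (iteratedFDeriv ℝ (i + 1) f) x :=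
      hf.differentiable_iteratedFDeriv (mod_cast WithTop.coe_lt_top _) x
    rw [iteratedFDeriv_succ_apply_left, ih,
      ← fderiv_continuousMultilinear_apply_const_apply hd' m b]
    simp only [iteratedFDeriv_succ_apply_left]
    rw [fderiv_continuousMultilinear_apply_const_apply (hd.clm_apply (by fun_prop)),
      fderiv_clm_apply hd (by fun_prop), fderiv_clm_apply hd (by fun_prop)]
    simp [hsymm.eq (m 0) b]

theorem norm_iteratedFDeriv_add_sub_sub_fderiv_le {f : E → F} (hf : ContDiff ℝ ∞ f) (x b : E)
    (i : ℕ) {M : ℝ}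
    (hM : ∀ z ∈ Metric.closedBall x ‖b‖, ‖iteratedFDeriv ℝ (i + 2) f z‖ ≤ M) :
    ‖iteratedFDeriv ℝ i f (x + b) - iteratedFDeriv ℝ i f x -
      fderiv ℝ (iteratedFDeriv ℝ i f) x b‖ ≤ M * ‖b‖ ^ 2 := by
  have hd (j : ℕ) : Differentiable ℝ (iteratedFDeriv ℝ j f) :=
    hf.differentiable_iteratedFDeriv (mod_cast WithTop.coe_lt_top _)
  have hx : x ∈ Metric.closedBall x ‖b‖ := Metric.mem_closedBall_self (norm_nonneg b)
  have hM₀ : 0 ≤ M := (norm_nonneg _).trans (hM x hx)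
  have hfderiv₂ : ∀ z ∈ Metric.closedBall x ‖b‖, ‖fderiv ℝ (iteratedFDeriv ℝ (i + 1) f) z‖ ≤ M :=
    fun z hz => norm_fderiv_iteratedFDeriv.trans_le (hM z hz)
  have hfderiv : ∀ z ∈ Metric.closedBall x ‖b‖,
      ‖fderiv ℝ (iteratedFDeriv ℝ i f) z - fderiv ℝ (iteratedFDeriv ℝ i f) x‖ ≤ M * ‖b‖ := by
    intro z hz
    rw [fderiv_iteratedFDeriv, Function.comp_apply, Function.comp_apply,
      ← LinearIsometryEquiv.map_sub, LinearIsometryEquiv.norm_map]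
    refine ((convex_closedBall x ‖b‖).norm_image_sub_le_of_norm_fderiv_le
      (fun y _ => hd (i + 1) y) hfderiv₂ hx hz).trans ?_
    gcongr
    exact mem_closedBall_iff_norm.1 hz
  simpa [pow_two, mul_assoc] using (convex_closedBall x ‖b‖).norm_image_sub_le_of_norm_fderiv_le'
    (fun y _ => hd i y) hfderiv hx (by simp : x + b ∈ _)

theorem norm_iteratedFDeriv_taylor_sub_le {f : E → F} (hf : ContDiff ℝ ∞ f) (x b : E)
    (i : ℕ) {M : ℝ}
    (hM : ∀ z ∈ Metric.closedBall x ‖b‖, ‖iteratedFDeriv ℝ (i + 2) f z‖ ≤ M) :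
    ‖iteratedFDeriv ℝ i (fun y => f (y + b) - f y - fderiv ℝ f y b) x‖ ≤ M * ‖b‖ ^ 2 := by
  have hle : (i : WithTop ℕ∞) ≤ ∞ := mod_cast le_top
  have hb : ContDiff ℝ ∞ (fun y => f (y + b)) := by fun_prop
  have hf' : ContDiff ℝ ∞ (fun y => fderiv ℝ f y b) :=
    (hf.fderiv_right (m := ∞) (by simp)).clm_apply contDiff_const
  rw [fun_iteratedFDeriv_sub_apply ((hb.sub hf).of_le hle).contDiffAt (hf'.of_le hle).contDiffAt,
    fun_iteratedFDeriv_sub_apply (hb.of_le hle).contDiffAt (hf.of_le hle).contDiffAt,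
    iteratedFDeriv_comp_add_right, iteratedFDeriv_fderiv_apply_const hf]
  exact norm_iteratedFDeriv_add_sub_sub_fderiv_le hf x b i hM

theorem norm_iteratedFDeriv_le_of_clm_apply {f : D → E →L[ℝ] F} (hf : ContDiff ℝ ∞ f) (i : ℕ)
    (x : D) {M : ℝ} (hM : 0 ≤ M)
    (h : ∀ c, ‖iteratedFDeriv ℝ i (fun y => f y c) x‖ ≤ M * ‖c‖) :
    ‖iteratedFDeriv ℝ i f x‖ ≤ M := by
  refine ContinuousMultilinearMap.opNorm_le_bound hM fun w =>
    ContinuousLinearMap.opNorm_le_bound _ (by positivity) fun c => ?_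
  rw [← iteratedFDeriv_clm_apply_const_apply hf (mod_cast le_top)]
  calc _ ≤ ‖iteratedFDeriv ℝ i (fun y => f y c) x‖ * ∏ j, ‖w j‖ :=
        ContinuousMultilinearMap.le_opNorm _ w
    _ ≤ M * ‖c‖ * ∏ j, ‖w j‖ := by gcongr; exact h c
    _ = M * (∏ j, ‖w j‖) * ‖c‖ := by ring

theorem norm_iteratedFDeriv_comp_clm_le {f : E → F} (hf : ContDiff ℝ ∞ f) (L : D →L[ℝ] E)
    (hL : ‖L‖ ≤ 1) (x : D) (i : ℕ) :
    ‖iteratedFDeriv ℝ i (fun y => f (L y)) x‖ ≤ ‖iteratedFDeriv ℝ i f (L x)‖ := by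
  have h := L.iteratedFDeriv_comp_right hf x (i := i) (mod_cast le_top)
  rw [Function.comp_def] at h
  rw [h]
  calc _ ≤ ‖iteratedFDeriv ℝ i f (L x)‖ * ∏ _j : Fin i, ‖L‖ :=
        ContinuousMultilinearMap.norm_compContinuousLinearMap_le _ _
    _ ≤ ‖iteratedFDeriv ℝ i f (L x)‖ * 1 := by
      gcongr
      exact Finset.prod_le_one (fun _ _ => norm_nonneg L) fun _ _ => hL
    _ = _ := mul_one _

theorem norm_iteratedFDeriv_clm_apply_le_two_pow {f : D → E →L[ℝ] F} {g : D → E}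
    (hf : ContDiff ℝ ∞ f) (hg : ContDiff ℝ ∞ g) {x : D} {i : ℕ} {M N : ℝ}
    (hM : ∀ j ≤ i, ‖iteratedFDeriv ℝ j f x‖ ≤ M) (hN : ∀ j ≤ i, ‖iteratedFDeriv ℝ j g x‖ ≤ N) :
    ‖iteratedFDeriv ℝ i (fun y => f y (g y)) x‖ ≤ 2 ^ i * M * N := by
  have hM₀ : 0 ≤ M := (norm_nonneg _).trans (hM 0 i.zero_le)
  calc _ ≤ ∑ j ∈ Finset.range (i + 1), (i.choose j : ℝ) * ‖iteratedFDeriv ℝ j f x‖ *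
          ‖iteratedFDeriv ℝ (i - j) g x‖ :=
        norm_iteratedFDeriv_clm_apply hf hg x (mod_cast le_top)
    _ ≤ ∑ j ∈ Finset.range (i + 1), (i.choose j : ℝ) * M * N := by
      gcongr with j hj
      · exact hM j (by grind)
      · exact hN (i - j) (by lia)
    _ = 2 ^ i * M * N := by
      rw [← Finset.sum_mul, ← Finset.sum_mul]
      exact_mod_cast congrArg (· * M * N) (congrArg Nat.cast (Nat.sum_range_choose i))

theorem norm_iteratedFDeriv_comp_const_sub (f : E → F) (y v : E) (i : ℕ) :
    ‖iteratedFDeriv ℝ i (fun v => f (y - v)) v‖ = ‖iteratedFDeriv ℝ i f (y - v)‖ := by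
  have h := (LinearIsometryEquiv.neg ℝ (E := E)).norm_iteratedFDeriv_comp_right
    (fun v => f (v + y)) v i
  rw [iteratedFDeriv_comp_add_right] at h
  simpa [Function.comp_def, neg_add_eq_sub] using h

end Calculus

section WeightedNorm

open scoped LineDeriv SchwartzMap ContDiff

variable {E : Type*} [NormedAddCommGroup E] [NormedSpace ℝ E]

theorem mu_le_ofReal_iff {r : ℤ} {l : ℕ} {f : E → ℂ} {M : ℝ} (hM : 0 ≤ M) :
    mu r l f ≤ ENNReal.ofReal M ↔
      ∀ x, ∀ i ≤ l, (1 + ‖x‖) ^ r * ‖iteratedFDeriv ℝ i f x‖ ≤ M := by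
  simp only [mu, iSup_le_iff, ENNReal.ofReal_le_ofReal_iff hM]

theorem SchwartzLike.exists_schwartzMap_eq {f : E → ℂ} (hf : SchwartzLike f) :
    ∃ S : 𝓢(E, ℂ), ⇑S = f := by
  refine ⟨⟨f, hf.1, fun k l => ⟨(mu (k : ℤ) l f).toReal, fun x => ?_⟩⟩, rfl⟩
  have hle := (mu_le_ofReal_iff ENNReal.toReal_nonneg).1
    (ENNReal.ofReal_toReal (hf.2 k l).ne).ge x l le_rfl
  rw [zpow_natCast] at hle
  refine le_trans ?_ hle
  gcongr
  linarith

/-- The seminorm `μ_{k,l}` of a Schwartz function as a real number, which is where the continuity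
estimates for maps on `𝓢` are carried out. -/
noncomputable def weightedNorm (k l : ℕ) (f : 𝓢(E, ℂ)) : ℝ := (mu (k : ℤ) l f).toReal

theorem mu_schwartzMap_ne_top (k l : ℕ) (f : 𝓢(E, ℂ)) : mu (k : ℤ) l f ≠ ⊤ := by
  refine ne_top_of_le_ne_top ENNReal.ofReal_ne_top ((mu_le_ofReal_iff
    (M := 2 ^ k * (Finset.Iic (k, l)).sup (fun m => SchwartzMap.seminorm ℝ m.1 m.2) f)
    (by positivity)).2 fun x i hi => ?_)
  rw [zpow_natCast]
  exact SchwartzMap.one_add_le_sup_seminorm_apply (𝕜 := ℝ) (m := (k, l)) le_rfl hi f x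

theorem schwartzLike_schwartzMap (f : 𝓢(E, ℂ)) : SchwartzLike f :=
  ⟨f.smooth ⊤, fun k l => (mu_schwartzMap_ne_top k l f).lt_top⟩

theorem ofReal_weightedNorm (k l : ℕ) (f : 𝓢(E, ℂ)) :
    ENNReal.ofReal (weightedNorm k l f) = mu (k : ℤ) l f :=
  ENNReal.ofReal_toReal (mu_schwartzMap_ne_top k l f)

theorem weightedNorm_nonneg (k l : ℕ) (f : 𝓢(E, ℂ)) : 0 ≤ weightedNorm k l f :=
  ENNReal.toReal_nonneg

theorem weightedNorm_le_iff {k l : ℕ} {f : 𝓢(E, ℂ)} {M : ℝ} (hM : 0 ≤ M) :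
    weightedNorm k l f ≤ M ↔
      ∀ x, ∀ i ≤ l, (1 + ‖x‖) ^ k * ‖iteratedFDeriv ℝ i f x‖ ≤ M := by
  rw [← ENNReal.ofReal_le_ofReal_iff hM, ofReal_weightedNorm, mu_le_ofReal_iff hM]
  simp only [zpow_natCast]

theorem le_weightedNorm {k l i : ℕ} (hi : i ≤ l) (f : 𝓢(E, ℂ)) (x : E) :
    (1 + ‖x‖) ^ k * ‖iteratedFDeriv ℝ i f x‖ ≤ weightedNorm k l f :=
  (weightedNorm_le_iff (weightedNorm_nonneg k l f)).1 le_rfl x i hi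

theorem weightedNorm_mono {k l l' : ℕ} (h : l ≤ l') (f : 𝓢(E, ℂ)) :
    weightedNorm k l f ≤ weightedNorm k l' f :=
  (weightedNorm_le_iff (weightedNorm_nonneg k l' f)).2
    fun x _ hi => le_weightedNorm (hi.trans h) f x

theorem weightedNorm_lineDerivOp_le (k l : ℕ) (b : E) (f : 𝓢(E, ℂ)) :
    weightedNorm k l (∂_{b} f) ≤ ‖b‖ * weightedNorm k (l + 1) f := by
  refine (weightedNorm_le_iff (mul_nonneg (norm_nonneg b) (weightedNorm_nonneg k (l + 1) f))).2
    fun x i hi => ?_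
  have hf : ContDiff ℝ ∞ f := f.smooth ⊤
  have hderiv : ‖iteratedFDeriv ℝ i (∂_{b} f : 𝓢(E, ℂ)) x‖ ≤
      ‖b‖ * ‖iteratedFDeriv ℝ (i + 1) f x‖ := by
    rw [← norm_iteratedFDeriv_fderiv]
    exact norm_iteratedFDeriv_clm_apply_const (hf.fderiv_right (m := ∞) (by simp)).contDiffAt
      (mod_cast le_top)
  calc _ ≤ (1 + ‖x‖) ^ k * (‖b‖ * ‖iteratedFDeriv ℝ (i + 1) f x‖) := by gcongr
    _ = ‖b‖ * ((1 + ‖x‖) ^ k * ‖iteratedFDeriv ℝ (i + 1) f x‖) := by ring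
    _ ≤ _ := by gcongr; exact le_weightedNorm (by lia) f x

end WeightedNorm

section ReflectTranslate

open scoped LineDeriv SchwartzMap ContDiff

theorem one_add_norm_sub_le_mul {E : Type*} [SeminormedAddCommGroup E] (a b : E) :
    1 + ‖a - b‖ ≤ (1 + ‖a‖) * (1 + ‖b‖) := by
  nlinarith [norm_sub_le a b, mul_nonneg (norm_nonneg a) (norm_nonneg b)]

variable {E : Type*} [NormedAddCommGroup E] [NormedSpace ℝ E]

/-- The Schwartz function `v ↦ f (y - v)`, as a linear map in `f`; for `f = ψ_ε` this is the
function `ψ_{ε,y}`. -/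
noncomputable def reflectTranslate (y : E) : 𝓢(E, ℂ) →L[ℝ] 𝓢(E, ℂ) :=
  SchwartzMap.compCLMOfAntilipschitz (g := fun v => y - v) (K := 1) ℝ (by fun_prop)
    (fun _ _ => by simp [edist_dist, dist_eq_norm, norm_sub_rev])

@[simp]
theorem reflectTranslate_apply (y : E) (f : 𝓢(E, ℂ)) (v : E) :
    reflectTranslate y f v = f (y - v) := rfl

theorem weightedNorm_reflectTranslate_le (k l : ℕ) (y : E) (f : 𝓢(E, ℂ)) :
    weightedNorm k l (reflectTranslate y f) ≤ (1 + ‖y‖) ^ k * weightedNorm k l f := by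
  refine (weightedNorm_le_iff (mul_nonneg (by positivity) (weightedNorm_nonneg k l f))).2
    fun v i hi => ?_
  have hv : 1 + ‖v‖ ≤ (1 + ‖y‖) * (1 + ‖y - v‖) := by
    simpa using one_add_norm_sub_le_mul y (y - v)
  calc (1 + ‖v‖) ^ k * ‖iteratedFDeriv ℝ i (reflectTranslate y f) v‖
      = (1 + ‖v‖) ^ k * ‖iteratedFDeriv ℝ i f (y - v)‖ :=
        congrArg _ (norm_iteratedFDeriv_comp_const_sub f y v i)
    _ ≤ ((1 + ‖y‖) * (1 + ‖y - v‖)) ^ k * ‖iteratedFDeriv ℝ i f (y - v)‖ := by gcongr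
    _ = (1 + ‖y‖) ^ k * ((1 + ‖y - v‖) ^ k * ‖iteratedFDeriv ℝ i f (y - v)‖) := by
      rw [mul_pow, mul_assoc]
    _ ≤ _ := by gcongr; exact le_weightedNorm hi f _

theorem weightedNorm_translate_taylor_le (k l : ℕ) (b : E) (f : 𝓢(E, ℂ)) :
    weightedNorm k l (SchwartzMap.compSubConstCLM ℝ (-b) f - f - ∂_{b} f) ≤
      (1 + ‖b‖) ^ k * weightedNorm k (l + 2) f * ‖b‖ ^ 2 := by
  have hf := weightedNorm_nonneg k (l + 2) f
  refine (weightedNorm_le_iff (by positivity)).2 fun v i hi => ?_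
  have hv : (0 : ℝ) < (1 + ‖v‖) ^ k := by positivity
  have htaylor : ⇑(SchwartzMap.compSubConstCLM ℝ (-b) f - f - ∂_{b} f) =
      fun w => f (w + b) - f w - fderiv ℝ f w b := by
    ext w
    simp [SchwartzMap.lineDerivOp_apply_eq_fderiv]
  have hball : ∀ z ∈ Metric.closedBall v ‖b‖, ‖iteratedFDeriv ℝ (i + 2) f z‖ ≤
      (1 + ‖b‖) ^ k * weightedNorm k (l + 2) f / (1 + ‖v‖) ^ k := by
    intro z hz
    have hz' : 1 + ‖v‖ ≤ (1 + ‖b‖) * (1 + ‖z‖) := by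
      have := one_add_norm_sub_le_mul (z - v) z
      rw [sub_sub_cancel_left, norm_neg] at this
      exact this.trans (by gcongr; exact mem_closedBall_iff_norm.1 hz)
    rw [le_div_iff₀ hv, mul_comm]
    calc _ ≤ ((1 + ‖b‖) * (1 + ‖z‖)) ^ k * ‖iteratedFDeriv ℝ (i + 2) f z‖ := by gcongr
      _ = (1 + ‖b‖) ^ k * ((1 + ‖z‖) ^ k * ‖iteratedFDeriv ℝ (i + 2) f z‖) := by
        rw [mul_pow, mul_assoc]
      _ ≤ _ := by gcongr; exact le_weightedNorm (by lia) f z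
  rw [htaylor, mul_comm, ← le_div_iff₀ hv]
  exact (norm_iteratedFDeriv_taylor_sub_le (f.smooth ⊤) v b i hball).trans_eq (by ring)

theorem weightedNorm_reflectTranslate_taylor_le (k l : ℕ) (y b : E) (f : 𝓢(E, ℂ)) :
    weightedNorm k l (reflectTranslate (y + b) f - reflectTranslate y f -
        reflectTranslate y (∂_{b} f)) ≤
      (1 + ‖y‖) ^ k * ((1 + ‖b‖) ^ k * weightedNorm k (l + 2) f * ‖b‖ ^ 2) := by
  have htranslate : reflectTranslate (y + b) f =
      reflectTranslate y (SchwartzMap.compSubConstCLM ℝ (-b) f) := by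
    ext v
    simp [sub_add_eq_add_sub]
  rw [htranslate, ← map_sub, ← map_sub]
  exact (weightedNorm_reflectTranslate_le k l y _).trans
    (by gcongr; exact weightedNorm_translate_taylor_le k l b f)

end ReflectTranslate

section Orbit

open scoped LineDeriv SchwartzMap ContDiff

variable {E G : Type*} [NormedAddCommGroup E] [NormedSpace ℝ E] [FiniteDimensional ℝ E]
  [NormedAddCommGroup G] [NormedSpace ℝ G] {Λ : 𝓢(E, ℂ) →ₗ[ℝ] G} {C : ℝ} {k l : ℕ}

/-- The derivative of the orbit map `y ↦ Λ (g (y - ·))` at `y`: differentiation falls on `g`. -/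
noncomputable def orbitDeriv (Λ : 𝓢(E, ℂ) →ₗ[ℝ] G) (g : 𝓢(E, ℂ)) (y : E) : E →L[ℝ] G :=
  LinearMap.toContinuousLinearMap
    { toFun b := Λ (reflectTranslate y (∂_{b} g))
      map_add' b c := by simp only [LineDeriv.lineDerivOp_left_add, map_add]
      map_smul' r b := by simp only [LineDeriv.lineDerivOp_left_smul, map_smul, RingHom.id_apply] }

@[simp]
theorem orbitDeriv_apply (g : 𝓢(E, ℂ)) (y b : E) :
    orbitDeriv Λ g y b = Λ (reflectTranslate y (∂_{b} g)) := rfl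

theorem hasFDerivAt_orbit (hC : 0 ≤ C) (hΛ : ∀ f, ‖Λ f‖ ≤ C * weightedNorm k l f)
    (g : 𝓢(E, ℂ)) (y : E) :
    HasFDerivAt (fun y => Λ (reflectTranslate y g)) (orbitDeriv Λ g y) y := by
  rw [hasFDerivAt_iff_isLittleO_nhds_zero]
  refine Asymptotics.IsBigO.trans_isLittleO (g := fun b : E => ‖b‖ ^ 2) ?_
    (Asymptotics.isLittleO_norm_pow_id one_lt_two)
  refine Asymptotics.IsBigO.of_bound
    (C * ((1 + ‖y‖) ^ k * ((1 + 1) ^ k * weightedNorm k (l + 2) g))) ?_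
  filter_upwards [Metric.ball_mem_nhds (0 : E) one_pos] with b hb
  have hb : ‖b‖ ≤ 1 := (mem_ball_zero_iff.1 hb).le
  have hg := weightedNorm_nonneg k (l + 2) g
  rw [orbitDeriv_apply, ← map_sub, ← map_sub, norm_pow, norm_norm]
  calc _ ≤ C * weightedNorm k l (reflectTranslate (y + b) g - reflectTranslate y g -
          reflectTranslate y (∂_{b} g)) := hΛ _
    _ ≤ C * ((1 + ‖y‖) ^ k * ((1 + ‖b‖) ^ k * weightedNorm k (l + 2) g * ‖b‖ ^ 2)) := by
      gcongr
      exact weightedNorm_reflectTranslate_taylor_le k l y b g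
    _ ≤ C * ((1 + ‖y‖) ^ k * ((1 + 1) ^ k * weightedNorm k (l + 2) g * ‖b‖ ^ 2)) := by gcongr
    _ = _ := by ring

theorem contDiff_orbit (hC : 0 ≤ C) (hΛ : ∀ f, ‖Λ f‖ ≤ C * weightedNorm k l f)
    (g : 𝓢(E, ℂ)) : ContDiff ℝ ∞ (fun y => Λ (reflectTranslate y g)) := by
  refine contDiff_infty.2 fun i => ?_
  induction i generalizing g with
  | zero =>
    exact contDiff_zero.2 (continuous_iff_continuousAt.2 fun y =>
      (hasFDerivAt_orbit hC hΛ g y).continuousAt)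
  | succ i ih =>
    exact contDiff_succ_iff_hasFDerivAt.2
      ⟨orbitDeriv Λ g, contDiff_clm_apply_iff.2 fun b => ih (∂_{b} g), hasFDerivAt_orbit hC hΛ g⟩

theorem norm_iteratedFDeriv_orbit_le (hC : 0 ≤ C) (hΛ : ∀ f, ‖Λ f‖ ≤ C * weightedNorm k l f)
    (g : 𝓢(E, ℂ)) (i : ℕ) (y : E) :
    ‖iteratedFDeriv ℝ i (fun y => Λ (reflectTranslate y g)) y‖ ≤
      C * (1 + ‖y‖) ^ k * weightedNorm k (l + i) g := by
  induction i generalizing g with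
  | zero =>
    rw [norm_iteratedFDeriv_zero, mul_assoc]
    exact (hΛ _).trans (by gcongr; exact weightedNorm_reflectTranslate_le k l y g)
  | succ i ih =>
    have hg := weightedNorm_nonneg k (l + (i + 1)) g
    have hfderiv (b : E) : (fun y => fderiv ℝ (fun y => Λ (reflectTranslate y g)) y b) =
        fun y => Λ (reflectTranslate y (∂_{b} g)) :=
      funext fun y => by rw [(hasFDerivAt_orbit hC hΛ g y).fderiv, orbitDeriv_apply]
    rw [← norm_iteratedFDeriv_fderiv]
    refine norm_iteratedFDeriv_le_of_clm_apply
      ((contDiff_orbit hC hΛ g).fderiv_right (by simp)) i y (by positivity) fun b => ?_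
    rw [hfderiv]
    calc _ ≤ C * (1 + ‖y‖) ^ k * weightedNorm k (l + i) (∂_{b} g) := ih (∂_{b} g)
      _ ≤ C * (1 + ‖y‖) ^ k * (‖b‖ * weightedNorm k (l + i + 1) g) := by
        gcongr
        exact weightedNorm_lineDerivOp_le k (l + i) b g
      _ = _ := by rw [add_assoc]; ring

theorem norm_iteratedFDeriv_orbit_comp_clm_le {D : Type*} [NormedAddCommGroup D]
    [NormedSpace ℝ D] (hC : 0 ≤ C) (hΛ : ∀ f, ‖Λ f‖ ≤ C * weightedNorm k l f) (g : 𝓢(E, ℂ))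
    {P : D →L[ℝ] E} (hP : ‖P‖ ≤ 1) {i I : ℕ} (hi : i ≤ I) (z : D) :
    ‖iteratedFDeriv ℝ i (fun z => Λ (reflectTranslate (P z) g)) z‖ ≤
      C * (1 + ‖z‖) ^ k * weightedNorm k (l + I) g := by
  have hg := weightedNorm_nonneg k (l + i) g
  have hPz : ‖P z‖ ≤ ‖z‖ := by simpa using P.le_of_opNorm_le hP z
  calc _ ≤ ‖iteratedFDeriv ℝ i (fun y => Λ (reflectTranslate y g)) (P z)‖ :=
        norm_iteratedFDeriv_comp_clm_le (contDiff_orbit hC hΛ g) P hP z i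
    _ ≤ C * (1 + ‖P z‖) ^ k * weightedNorm k (l + i) g :=
      norm_iteratedFDeriv_orbit_le hC hΛ g i (P z)
    _ ≤ C * (1 + ‖z‖) ^ k * weightedNorm k (l + I) g := by
      gcongr
      exact weightedNorm_mono (by lia) g

end Orbit

section OrbitPairing

open scoped SchwartzMap ContDiff

variable {E F G : Type*} [NormedAddCommGroup E] [NormedSpace ℝ E] [FiniteDimensional ℝ E]
  [NormedAddCommGroup F] [NormedSpace ℝ F] [FiniteDimensional ℝ F]
  [NormedAddCommGroup G] [NormedSpace ℝ G]
  {Θ : 𝓢(E, ℂ) →ₗ[ℝ] G →L[ℝ] ℂ} {Λ : 𝓢(F, ℂ) →ₗ[ℝ] G} {C₁ C₂ : ℝ} {k₁ l₁ k₂ l₂ : ℕ}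

theorem contDiff_orbit_clm_apply_orbit (hC₁ : 0 ≤ C₁)
    (hΘ : ∀ h, ‖Θ h‖ ≤ C₁ * weightedNorm k₁ l₁ h) (hC₂ : 0 ≤ C₂)
    (hΛ : ∀ g, ‖Λ g‖ ≤ C₂ * weightedNorm k₂ l₂ g) (h : 𝓢(E, ℂ)) (g : 𝓢(F, ℂ)) :
    ContDiff ℝ ∞ fun z : E × F => Θ (reflectTranslate z.1 h) (Λ (reflectTranslate z.2 g)) :=
  ((contDiff_orbit hC₁ hΘ h).comp contDiff_fst).clm_apply
    ((contDiff_orbit hC₂ hΛ g).comp contDiff_snd)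

theorem mu_orbit_clm_apply_orbit_le (hC₁ : 0 ≤ C₁)
    (hΘ : ∀ h, ‖Θ h‖ ≤ C₁ * weightedNorm k₁ l₁ h) (hC₂ : 0 ≤ C₂)
    (hΛ : ∀ g, ‖Λ g‖ ≤ C₂ * weightedNorm k₂ l₂ g) (h : 𝓢(E, ℂ)) (g : 𝓢(F, ℂ)) (I : ℕ) :
    mu (-((k₁ + k₂ : ℕ) : ℤ)) I
        (fun z : E × F => Θ (reflectTranslate z.1 h) (Λ (reflectTranslate z.2 g))) ≤
      ENNReal.ofReal
        (2 ^ I * (C₁ * weightedNorm k₁ (l₁ + I) h) * (C₂ * weightedNorm k₂ (l₂ + I) g)) := by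
  have hh := weightedNorm_nonneg k₁ (l₁ + I) h
  have hg := weightedNorm_nonneg k₂ (l₂ + I) g
  refine (mu_le_ofReal_iff (by positivity)).2 fun z i hi => ?_
  rw [zpow_neg, zpow_natCast, inv_mul_le_iff₀ (by positivity)]
  calc _ ≤ 2 ^ i * (C₁ * (1 + ‖z‖) ^ k₁ * weightedNorm k₁ (l₁ + I) h) *
          (C₂ * (1 + ‖z‖) ^ k₂ * weightedNorm k₂ (l₂ + I) g) :=
        norm_iteratedFDeriv_clm_apply_le_two_pow
          ((contDiff_orbit hC₁ hΘ h).comp contDiff_fst)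
          ((contDiff_orbit hC₂ hΛ g).comp contDiff_snd)
          (fun j hj => norm_iteratedFDeriv_orbit_comp_clm_le hC₁ hΘ h
            (ContinuousLinearMap.norm_fst_le ℝ E F) (hj.trans hi) z)
          (fun j hj => norm_iteratedFDeriv_orbit_comp_clm_le hC₂ hΛ g
            (ContinuousLinearMap.norm_snd_le ℝ E F) (hj.trans hi) z)
    _ ≤ 2 ^ I * (C₁ * (1 + ‖z‖) ^ k₁ * weightedNorm k₁ (l₁ + I) h) *
          (C₂ * (1 + ‖z‖) ^ k₂ * weightedNorm k₂ (l₂ + I) g) := by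
      gcongr
      norm_num
    _ = _ := by ring

end OrbitPairing

section GrowthBound

open scoped SchwartzMap BoundedContinuousFunction

variable {E F : Type*} [NormedAddCommGroup E] [NormedAddCommGroup F] [NormedSpace ℝ F]

/-- The order-zero part of continuity into `O_M`, with explicit constants: every `A f` is
continuous and `μ_{-p,0}(A f) ≤ C μ_{k,l}(f)`. -/
structure HasGrowthBound (A : 𝓢(F, ℂ) → E → ℂ) (C : ℝ) (p k l : ℕ) : Prop where
  nonneg : 0 ≤ C
  continuous : ∀ f, Continuous (A f)
  norm_le : ∀ f u, ‖A f u‖ ≤ C * weightedNorm k l f * (1 + ‖u‖) ^ p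

theorem HasGrowthBound.of_mu_le [NormedSpace ℝ E] {A : 𝓢(F, ℂ) → E → ℂ} {C : ℝ} {p k l : ℕ}
    (hC : 0 ≤ C) (hcont : ∀ f, Continuous (A f))
    (hA : ∀ f, mu (-(p : ℤ)) 0 (A f) ≤ ENNReal.ofReal C * mu (k : ℤ) l f) :
    HasGrowthBound A C p k l where
  nonneg := hC
  continuous := hcont
  norm_le f u := by
    have hf := weightedNorm_nonneg k l f
    have h := hA f
    rw [← ofReal_weightedNorm, ← ENNReal.ofReal_mul hC, mu_le_ofReal_iff (by positivity)] at h
    have hu := h u 0 le_rfl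
    rwa [norm_iteratedFDeriv_zero, zpow_neg, zpow_natCast, inv_mul_le_iff₀ (by positivity),
      mul_comm] at hu

namespace HasGrowthBound

variable {A : 𝓢(F, ℂ) →ₗ[ℝ] (E → ℂ)} {C : ℝ} {p k l : ℕ}

theorem norm_inv_smul_apply_le (hA : HasGrowthBound A C p k l) (f : 𝓢(F, ℂ)) (u : E) :
    ‖((1 + ‖u‖) ^ p)⁻¹ • A f u‖ ≤ C * weightedNorm k l f := by
  rw [norm_smul, norm_inv, Real.norm_of_nonneg (by positivity), inv_mul_le_iff₀ (by positivity),
    mul_comm]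
  exact hA.norm_le f u

theorem continuous_inv_smul_apply (hA : HasGrowthBound A C p k l) (f : 𝓢(F, ℂ)) :
    Continuous fun u => ((1 + ‖u‖) ^ p)⁻¹ • A f u :=
  have hweight : Continuous fun u : E => (1 + ‖u‖) ^ p := by fun_prop
  (hweight.inv₀ fun u => by positivity).smul (hA.continuous f)

/-- The map `f ↦ (1 + ‖u‖)^(-p) A f u` into the bounded continuous functions: dividing by the
weight gives `A` a normed codomain, to which the orbit lemmas apply. -/
noncomputable def toBoundedContinuous (hA : HasGrowthBound A C p k l) :
    𝓢(F, ℂ) →ₗ[ℝ] (E →ᵇ ℂ) where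
  toFun f := BoundedContinuousFunction.ofNormedAddCommGroup
    (fun u => ((1 + ‖u‖) ^ p)⁻¹ • A f u) (hA.continuous_inv_smul_apply f) _
    (hA.norm_inv_smul_apply_le f)
  map_add' f g := by ext u; simp
  map_smul' r f := by ext u; simp [mul_left_comm]

@[simp]
theorem toBoundedContinuous_apply (hA : HasGrowthBound A C p k l) (f : 𝓢(F, ℂ)) (u : E) :
    hA.toBoundedContinuous f u = ((1 + ‖u‖) ^ p)⁻¹ • A f u := rfl

theorem norm_toBoundedContinuous_le (hA : HasGrowthBound A C p k l) (f : 𝓢(F, ℂ)) :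
    ‖hA.toBoundedContinuous f‖ ≤ C * weightedNorm k l f :=
  BoundedContinuousFunction.norm_ofNormedAddCommGroup_le _
    (mul_nonneg hA.nonneg (weightedNorm_nonneg k l f)) (hA.norm_inv_smul_apply_le f)

theorem toBoundedContinuous_mul_smul (hA : HasGrowthBound A C p k l) (f : 𝓢(F, ℂ)) (u : E)
    (c : ℂ) : hA.toBoundedContinuous f u * ((1 + ‖u‖) ^ p • c) = A f u * c := by
  have hweight : (1 + ‖u‖) ^ p ≠ 0 := by positivity
  rw [toBoundedContinuous_apply, smul_mul_smul_comm, inv_mul_cancel₀ hweight, one_smul]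

end HasGrowthBound

end GrowthBound

section WeightedPairing

open scoped SchwartzMap BoundedContinuousFunction

variable {E : Type*} [NormedAddCommGroup E]

/-- The integral of `(1 + ‖u‖)^(-r)`, the constant in the pairing estimates; `r` is
`μ.integrablePower`, which is large enough for convergence when `μ` has temperate growth. -/
noncomputable def decayIntegral [MeasurableSpace E] (μ : Measure E) : ℝ :=
  ∫ u, (1 + ‖u‖) ^ (-(μ.integrablePower : ℝ)) ∂μ

theorem decayIntegral_nonneg [MeasurableSpace E] (μ : Measure E) : 0 ≤ decayIntegral μ :=
  integral_nonneg fun _ => by positivity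

variable [NormedSpace ℝ E]

theorem norm_mul_smul_apply_le (r p : ℕ) (b : E →ᵇ ℂ) (h : 𝓢(E, ℂ)) (u : E) :
    ‖b u * ((1 + ‖u‖) ^ p • h u)‖ ≤
      weightedNorm (p + r) 0 h * ‖b‖ * (1 + ‖u‖) ^ (-(r : ℝ)) := by
  have hh := le_weightedNorm (k := p + r) (le_refl 0) h u
  rw [norm_iteratedFDeriv_zero, pow_add] at hh
  rw [Real.rpow_neg (by positivity), Real.rpow_natCast, ← div_eq_mul_inv,
    le_div_iff₀ (by positivity), norm_mul, norm_smul, Real.norm_of_nonneg (by positivity)]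
  calc _ ≤ ‖b‖ * ((1 + ‖u‖) ^ p * ‖h u‖) * (1 + ‖u‖) ^ r := by
        gcongr
        exact b.norm_coe_le_norm u
    _ = (1 + ‖u‖) ^ p * (1 + ‖u‖) ^ r * ‖h u‖ * ‖b‖ := by ring
    _ ≤ _ := by gcongr

variable [MeasurableSpace E] (μ : Measure E) [μ.HasTemperateGrowth]

theorem norm_integral_mul_smul_le (p : ℕ) (b : E →ᵇ ℂ) (h : 𝓢(E, ℂ)) :
    ‖∫ u, b u * ((1 + ‖u‖) ^ p • h u) ∂μ‖ ≤
      decayIntegral μ * weightedNorm (p + μ.integrablePower) 0 h * ‖b‖ := by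
  refine (norm_integral_le_of_norm_le (μ.integrable_pow_neg_integrablePower.const_mul _)
    (Eventually.of_forall (norm_mul_smul_apply_le μ.integrablePower p b h))).trans_eq ?_
  rw [integral_const_mul, decayIntegral]
  ring

variable [BorelSpace E]

theorem integrable_mul_smul (p : ℕ) (b : E →ᵇ ℂ) (h : 𝓢(E, ℂ)) :
    Integrable (fun u => b u * ((1 + ‖u‖) ^ p • h u)) μ :=
  (μ.integrable_pow_neg_integrablePower.const_mul _).mono'
    (Continuous.aestronglyMeasurable (by have := h.continuous; fun_prop))
    (Eventually.of_forall (norm_mul_smul_apply_le μ.integrablePower p b h))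

/-- The pairing `(h, b) ↦ ∫ b (1 + ‖u‖)^p h dμ` of Schwartz functions with bounded continuous
functions; the weight undoes the one in `HasGrowthBound.toBoundedContinuous`. -/
noncomputable def weightedPairing (p : ℕ) : 𝓢(E, ℂ) →ₗ[ℝ] (E →ᵇ ℂ) →L[ℝ] ℂ where
  toFun h := LinearMap.mkContinuous
    { toFun b := ∫ u, b u * ((1 + ‖u‖) ^ p • h u) ∂μ
      map_add' b c := by
        rw [← integral_add (integrable_mul_smul μ p b h) (integrable_mul_smul μ p c h)]
        simp only [BoundedContinuousFunction.coe_add, Pi.add_apply, add_mul]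
      map_smul' r b := by
        rw [RingHom.id_apply, ← integral_smul]
        simp only [BoundedContinuousFunction.coe_smul, smul_mul_assoc] }
    _ fun b => norm_integral_mul_smul_le μ p b h
  map_add' h h' := by
    ext b
    simp only [LinearMap.mkContinuous_apply, add_apply, LinearMap.coe_mk,
      AddHom.coe_mk]
    rw [← integral_add (integrable_mul_smul μ p b h) (integrable_mul_smul μ p b h')]
    simp only [smul_add, mul_add]
  map_smul' r h := by
    ext b
    simp only [LinearMap.mkContinuous_apply, smul_apply, LinearMap.coe_mk,
      AddHom.coe_mk, RingHom.id_apply]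
    rw [← integral_smul]
    simp only [smul_comm _ r, mul_smul_comm]

@[simp]
theorem weightedPairing_apply (p : ℕ) (h : 𝓢(E, ℂ)) (b : E →ᵇ ℂ) :
    weightedPairing μ p h b = ∫ u, b u * ((1 + ‖u‖) ^ p • h u) ∂μ := rfl

theorem norm_weightedPairing_le (p : ℕ) (h : 𝓢(E, ℂ)) :
    ‖weightedPairing μ p h‖ ≤ decayIntegral μ * weightedNorm (p + μ.integrablePower) 0 h :=
  LinearMap.mkContinuous_norm_le _
    (mul_nonneg (decayIntegral_nonneg μ) (weightedNorm_nonneg _ _ _))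
    fun b => norm_integral_mul_smul_le μ p b h

end WeightedPairing

section Kernel

open scoped SchwartzMap ContDiff

variable {E F : Type*} [NormedAddCommGroup E] [NormedSpace ℝ E] [FiniteDimensional ℝ E]
  [MeasurableSpace E] [BorelSpace E] {μ : Measure E} [μ.IsAddHaarMeasure]
  [NormedAddCommGroup F] [NormedSpace ℝ F]
  {A : 𝓢(F, ℂ) →ₗ[ℝ] (E → ℂ)} {C : ℝ} {p k l : ℕ}

namespace HasGrowthBound

theorem integrable_apply_sub_mul (hA : HasGrowthBound A C p k l) (f : 𝓢(F, ℂ)) (h : 𝓢(E, ℂ))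
    (x : E) : Integrable (fun u => A f (x - u) * h u) μ := by
  have hint := integrable_mul_smul μ p (hA.toBoundedContinuous f) (reflectTranslate x h)
  simp only [hA.toBoundedContinuous_mul_smul] at hint
  simpa using hint.comp_sub_left x

theorem integral_apply_sub_mul_eq (hA : HasGrowthBound A C p k l) (f : 𝓢(F, ℂ)) (h : 𝓢(E, ℂ))
    (x : E) :
    ∫ u, A f (x - u) * h u ∂μ =
      weightedPairing μ p (reflectTranslate x h) (hA.toBoundedContinuous f) := by
  simp only [weightedPairing_apply, hA.toBoundedContinuous_mul_smul]
  rw [← integral_sub_left_eq_self _ μ x]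
  simp only [reflectTranslate_apply, sub_sub_cancel]

end HasGrowthBound

variable (μ A) in
/-- The kernel `(x, y) ↦ (A (g (y - ·)) ∗ h) x` of `A`, regularized by `g` and `h`; the net `H_ε`
is obtained from `A = L_ε`, `g = ψ_ε`, `h = φ_ε`. -/
noncomputable def regularizedKernel (g : 𝓢(F, ℂ)) (h : 𝓢(E, ℂ)) (z : E × F) : ℂ :=
  ∫ u, A (reflectTranslate z.2 g) (z.1 - u) * h u ∂μ

theorem HasGrowthBound.regularizedKernel_eq (hA : HasGrowthBound A C p k l) (g : 𝓢(F, ℂ))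
    (h : 𝓢(E, ℂ)) :
    regularizedKernel μ A g h = fun z => weightedPairing μ p (reflectTranslate z.1 h)
      (hA.toBoundedContinuous (reflectTranslate z.2 g)) :=
  funext fun z => hA.integral_apply_sub_mul_eq (reflectTranslate z.2 g) h z.1

variable [FiniteDimensional ℝ F]

theorem HasGrowthBound.contDiff_regularizedKernel (hA : HasGrowthBound A C p k l) (g : 𝓢(F, ℂ))
    (h : 𝓢(E, ℂ)) : ContDiff ℝ ∞ (regularizedKernel μ A g h) := by
  rw [hA.regularizedKernel_eq]
  exact contDiff_orbit_clm_apply_orbit (decayIntegral_nonneg μ) (norm_weightedPairing_le μ p)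
    hA.nonneg hA.norm_toBoundedContinuous_le h g

theorem HasGrowthBound.mu_regularizedKernel_le (hA : HasGrowthBound A C p k l) (g : 𝓢(F, ℂ))
    (h : 𝓢(E, ℂ)) (I : ℕ) :
    mu (-((p + μ.integrablePower + k : ℕ) : ℤ)) I (regularizedKernel μ A g h) ≤
      ENNReal.ofReal (2 ^ I * decayIntegral μ) *
        (ENNReal.ofReal C * mu (k : ℤ) (l + I) g *
          mu ((p + μ.integrablePower : ℕ) : ℤ) I h) := by
  have hJ := decayIntegral_nonneg μ
  have hC := hA.nonneg
  have hg := weightedNorm_nonneg k (l + I) g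
  rw [hA.regularizedKernel_eq]
  refine (mu_orbit_clm_apply_orbit_le hJ (norm_weightedPairing_le μ p) hC
    hA.norm_toBoundedContinuous_le h g I).trans_eq ?_
  rw [← ofReal_weightedNorm, ← ofReal_weightedNorm, ← ENNReal.ofReal_mul (by positivity),
    ← ENNReal.ofReal_mul (by positivity), ← ENNReal.ofReal_mul (by positivity), zero_add]
  ring_nf

end Kernel

section Nets

open scoped SchwartzMap Topology

theorem isOEps_iff_eventually {f : ℝ → ENNReal} {a : ℝ → ℝ} :
    IsOEps f a ↔ ∃ C > 0, ∀ᶠ ε in 𝓝[>] (0 : ℝ), f ε ≤ ENNReal.ofReal (C * a ε) := by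
  simp only [IsOEps, Filter.Eventually, mem_nhdsGT_iff_exists_Ioc_subset, Set.subset_def,
    Set.mem_Ioc, Set.mem_Ioi, Set.mem_ofPred_eq, and_imp]

theorem isOEps_ofReal (a : ℝ → ℝ) : IsOEps (fun ε => ENNReal.ofReal (a ε)) a :=
  ⟨1, one_pos, 1, one_pos, fun ε _ _ => by rw [one_mul]⟩

theorem IsOEps.of_eventually_le_mul {f g : ℝ → ENNReal} {a : ℝ → ℝ} {K : ENNReal} (hK : K ≠ ⊤)
    (hfg : ∀ᶠ ε in 𝓝[>] 0, f ε ≤ K * g ε) (hg : IsOEps g a) : IsOEps f a := by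
  obtain ⟨C, hC, hg⟩ := isOEps_iff_eventually.1 hg
  refine isOEps_iff_eventually.2 ⟨(K.toReal + 1) * C, by positivity, ?_⟩
  filter_upwards [hfg, hg] with ε hfgε hgε
  have hKle : K ≤ ENNReal.ofReal (K.toReal + 1) :=
    (ENNReal.le_ofReal_iff_toReal_le hK (by positivity)).2 (by linarith)
  calc f ε ≤ ENNReal.ofReal (K.toReal + 1) * ENNReal.ofReal (C * a ε) :=
        hfgε.trans (mul_le_mul' hKle hgε)
    _ = ENNReal.ofReal ((K.toReal + 1) * C * a ε) := by
      rw [← ENNReal.ofReal_mul (by positivity), mul_assoc]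

theorem IsOEps.mul_zpow_neg {f g : ℝ → ENNReal} {M N : ℕ}
    (hf : IsOEps f fun ε => ε ^ (-(M : ℤ))) (hg : IsOEps g fun ε => ε ^ (-(N : ℤ))) :
    IsOEps (fun ε => f ε * g ε) fun ε => ε ^ (-((M + N : ℕ) : ℤ)) := by
  obtain ⟨C, hC, hf⟩ := isOEps_iff_eventually.1 hf
  obtain ⟨D, hD, hg⟩ := isOEps_iff_eventually.1 hg
  refine isOEps_iff_eventually.2 ⟨C * D, mul_pos hC hD, ?_⟩
  filter_upwards [hf, hg, self_mem_nhdsWithin] with ε hfε hgε hε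
  have hε : 0 < ε := hε
  calc f ε * g ε ≤ ENNReal.ofReal (C * ε ^ (-(M : ℤ))) * ENNReal.ofReal (D * ε ^ (-(N : ℤ))) := by
        gcongr
    _ = ENNReal.ofReal (C * D * ε ^ (-((M + N : ℕ) : ℤ))) := by
      rw [← ENNReal.ofReal_mul (by positivity), Nat.cast_add, neg_add, zpow_add₀ hε.ne']
      ring_nf

end Nets

section Scaled

open scoped SchwartzMap Topology

variable {d : ℕ}

theorem exists_schwartzMap_eq_scaled (ρ : 𝓢(Fin d → ℝ, ℂ)) {ε : ℝ} (hε : 0 < ε) :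
    ∃ S : 𝓢(Fin d → ℝ, ℂ), ⇑S = scaled ρ ε := by
  have hanti : AntilipschitzWith ε.toNNReal (fun x : Fin d → ℝ => ε⁻¹ • x) :=
    AntilipschitzWith.of_le_mul_dist fun x y => by
      rw [dist_smul₀, Real.norm_of_nonneg (by positivity), Real.coe_toNNReal ε hε.le,
        mul_inv_cancel_left₀ hε.ne']
  exact ⟨(ε ^ (-(d : ℤ)) : ℝ) • SchwartzMap.compCLMOfAntilipschitz ℝ (by fun_prop) hanti ρ,
    funext fun _ => Complex.real_smul⟩

theorem norm_iteratedFDeriv_scaled (ρ : 𝓢(Fin d → ℝ, ℂ)) {ε : ℝ} (hε : 0 < ε) (i : ℕ)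
    (x : Fin d → ℝ) :
    ‖iteratedFDeriv ℝ i (scaled ρ ε) x‖ = ε⁻¹ ^ (d + i) * ‖iteratedFDeriv ℝ i ρ (ε⁻¹ • x)‖ := by
  have hρ : ContDiff ℝ i ρ := ρ.smooth i
  have hfun : scaled ρ ε = fun x => ε ^ (-(d : ℤ)) • ρ (ε⁻¹ • x) :=
    funext fun _ => Complex.real_smul.symm
  rw [hfun, iteratedFDeriv_const_smul_apply' (by fun_prop), iteratedFDeriv_comp_const_smul _ hρ,
    norm_smul, norm_smul, Real.norm_of_nonneg (by positivity),
    Real.norm_of_nonneg (by positivity), zpow_neg, zpow_natCast, ← inv_pow, pow_add, mul_assoc]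

theorem mu_scaled_le (ρ : 𝓢(Fin d → ℝ, ℂ)) {ε : ℝ} (hε : ε ∈ Set.Ioc (0 : ℝ) 1) (k l : ℕ) :
    mu (k : ℤ) l (scaled ρ ε) ≤
      mu (k : ℤ) l ρ * ENNReal.ofReal (ε ^ (-((d + l : ℕ) : ℤ))) := by
  obtain ⟨hε₀, hε₁⟩ := hε
  have hinv : 1 ≤ ε⁻¹ := (one_le_inv₀ hε₀).2 hε₁
  have hρ := weightedNorm_nonneg k l ρ
  rw [← ofReal_weightedNorm, ← ENNReal.ofReal_mul hρ]
  refine (mu_le_ofReal_iff (by positivity)).2 fun x i hi => ?_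
  have hx : ‖x‖ ≤ ‖ε⁻¹ • x‖ := by
    rw [norm_smul, Real.norm_of_nonneg (by positivity)]
    exact le_mul_of_one_le_left (norm_nonneg x) hinv
  rw [norm_iteratedFDeriv_scaled ρ hε₀, zpow_neg, zpow_natCast, zpow_natCast, ← inv_pow]
  calc _ ≤ (1 + ‖ε⁻¹ • x‖) ^ k * (ε⁻¹ ^ (d + l) * ‖iteratedFDeriv ℝ i ρ (ε⁻¹ • x)‖) := by
        gcongr
    _ = (1 + ‖ε⁻¹ • x‖) ^ k * ‖iteratedFDeriv ℝ i ρ (ε⁻¹ • x)‖ * ε⁻¹ ^ (d + l) := by ring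
    _ ≤ _ := by gcongr; exact le_weightedNorm hi ρ _

theorem isESNet_scaled (ρ : 𝓢(Fin d → ℝ, ℂ)) : IsESNet (scaled ρ) := by
  refine ⟨fun ε hε => ?_, fun k l => ⟨d + l, ?_⟩⟩
  · obtain ⟨S, hS⟩ := exists_schwartzMap_eq_scaled ρ hε.1
    exact hS ▸ schwartzLike_schwartzMap S
  · refine IsOEps.of_eventually_le_mul (mu_schwartzMap_ne_top k l ρ) ?_ (isOEps_ofReal _)
    filter_upwards [Ioc_mem_nhdsGT one_pos] with ε hε using mu_scaled_le ρ hε k l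

end Scaled

section KernelNet

open scoped SchwartzMap Topology

theorem ContinuousIntoOM.exists_hasGrowthBound {m n : ℕ}
    {A : 𝓢(Fin n → ℝ, ℂ) → (Fin m → ℝ) → ℂ} (hA : ContinuousIntoOM m n A)
    (hcont : ∀ f, Continuous (A f)) : ∃ C p k l, HasGrowthBound A C p k l := by
  obtain ⟨C, hC, p, k, l, hle⟩ := hA 0
  exact ⟨C, p, k, l, .of_mu_le hC hcont hle⟩

theorem ModerateNetMaps.exists_hasGrowthBound {m n : ℕ}
    {L : ℝ → 𝓢(Fin n → ℝ, ℂ) → (Fin m → ℝ) → ℂ} (hL : ModerateNetMaps m n L) :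
    ∃ (C : ℝ → ℝ) (N p k l : ℕ),
      IsOEps (fun ε => ENNReal.ofReal (C ε)) (fun ε => ε ^ (-(N : ℤ))) ∧
      ∀ᶠ ε in 𝓝[>] 0, HasGrowthBound (L ε) (C ε) p k l := by
  obtain ⟨C, hC, ⟨N, C₀, hC₀, η, hη, hCle⟩, p, k, l, η', hη', hle⟩ := hL.2 0
  refine ⟨C, N, p, k, l, ⟨C₀, hC₀, η, hη, fun ε hε hεη =>
    ENNReal.ofReal_le_ofReal (hCle ε hε hεη)⟩, ?_⟩
  filter_upwards [Ioc_mem_nhdsGT one_pos, Ioc_mem_nhdsGT hη'] with ε hε hεη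
  exact .of_mu_le (hC ε) (fun f => (hL.1 ε hε f).1.continuous) (hle ε hεη.1 hεη.2)

variable {E F : Type*} [NormedAddCommGroup E] [NormedSpace ℝ E]
  [NormedAddCommGroup F] [NormedSpace ℝ F] [MeasurableSpace E]

theorem exists_integral_eq_regularizedKernel (μ : Measure E) (A : 𝓢(F, ℂ) →ₗ[ℝ] (E → ℂ))
    {ψ : F → ℂ} (hψ : SchwartzLike ψ) {φ : E → ℂ} (hφ : SchwartzLike φ) {Ψ : F → 𝓢(F, ℂ)}
    (hΨ : ∀ y v, Ψ y v = ψ (y - v)) :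
    ∃ (g : 𝓢(F, ℂ)) (h : 𝓢(E, ℂ)), ⇑g = ψ ∧ ⇑h = φ ∧
      (fun z : E × F => ∫ u, A (Ψ z.2) (z.1 - u) * φ u ∂μ) = regularizedKernel μ A g h := by
  obtain ⟨g, rfl⟩ := hψ.exists_schwartzMap_eq
  obtain ⟨h, rfl⟩ := hφ.exists_schwartzMap_eq
  obtain rfl : Ψ = fun y => reflectTranslate y g :=
    funext fun y => SchwartzMap.ext fun v => hΨ y v
  exact ⟨g, h, rfl, rfl, rfl⟩

variable [FiniteDimensional ℝ E] [FiniteDimensional ℝ F] [BorelSpace E]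

theorem HasGrowthBound.temperateGrowth'_regularizedKernel {A : 𝓢(F, ℂ) →ₗ[ℝ] (E → ℂ)} {C : ℝ}
    {p k l : ℕ} (hA : HasGrowthBound A C p k l) (μ : Measure E) [μ.IsAddHaarMeasure]
    (g : 𝓢(F, ℂ)) (h : 𝓢(E, ℂ)) : TemperateGrowth' (regularizedKernel μ A g h) :=
  ⟨hA.contDiff_regularizedKernel g h, fun I => ⟨_, (hA.mu_regularizedKernel_le g h I).trans_lt
    (ENNReal.mul_lt_top ENNReal.ofReal_lt_top (ENNReal.mul_lt_top
      (ENNReal.mul_lt_top ENNReal.ofReal_lt_top (mu_schwartzMap_ne_top k _ g).lt_top)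
      (mu_schwartzMap_ne_top _ I h).lt_top))⟩⟩

theorem stmt13_general (μ : Measure E) [μ.IsAddHaarMeasure]
    {L : ℝ → 𝓢(F, ℂ) →ₗ[ℝ] (E → ℂ)}
    (hL : ∀ ε ∈ Set.Ioc (0 : ℝ) 1, ∃ C p k l, HasGrowthBound (L ε) C p k l)
    (hLmod : ∃ (C : ℝ → ℝ) (N p k l : ℕ),
      IsOEps (fun ε => ENNReal.ofReal (C ε)) (fun ε => ε ^ (-(N : ℤ))) ∧
      ∀ᶠ ε in 𝓝[>] 0, HasGrowthBound (L ε) (C ε) p k l)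
    {ψ : ℝ → F → ℂ} (hψ : IsESNet ψ) {φ : ℝ → E → ℂ} (hφ : IsESNet φ)
    {Ψ : ℝ → F → 𝓢(F, ℂ)} (hΨ : ∀ ε ∈ Set.Ioc (0 : ℝ) 1, ∀ y v, Ψ ε y v = ψ ε (y - v)) :
    (∀ ε ∈ Set.Ioc (0 : ℝ) 1, ∀ x y,
      Integrable (fun u => L ε (Ψ ε y) (x - u) * φ ε u) μ) ∧
    IsEtauNet (fun ε (z : E × F) => ∫ u, L ε (Ψ ε z.2) (z.1 - u) * φ ε u ∂μ) := by
  have hkernel ε (hε : ε ∈ Set.Ioc (0 : ℝ) 1) :=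
    exists_integral_eq_regularizedKernel μ (L ε) (hψ.1 ε hε) (hφ.1 ε hε) (hΨ ε hε)
  refine ⟨fun ε hε x y => ?_, fun ε hε => ?_, fun I => ?_⟩
  · obtain ⟨C, p, k, l, hA⟩ := hL ε hε
    obtain ⟨h, hh⟩ := (hφ.1 ε hε).exists_schwartzMap_eq
    exact hh ▸ hA.integrable_apply_sub_mul (Ψ ε y) h x
  · obtain ⟨C, p, k, l, hA⟩ := hL ε hε
    obtain ⟨g, h, -, -, hH⟩ := hkernel ε hε
    simp only [hH]
    exact hA.temperateGrowth'_regularizedKernel μ g h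
  · obtain ⟨C, N, p, k, l, hC, hA⟩ := hLmod
    obtain ⟨Nψ, hNψ⟩ := hψ.2 k (l + I)
    obtain ⟨Nφ, hNφ⟩ := hφ.2 (p + μ.integrablePower) I
    refine ⟨p + μ.integrablePower + k, N + Nψ + Nφ, IsOEps.of_eventually_le_mul
      (K := ENNReal.ofReal (2 ^ I * decayIntegral μ)) ENNReal.ofReal_ne_top ?_
      ((hC.mul_zpow_neg hNψ).mul_zpow_neg hNφ)⟩
    filter_upwards [hA, Ioc_mem_nhdsGT one_pos] with ε hAε hε
    obtain ⟨g, h, hg, hh, hH⟩ := hkernel ε hε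
    rw [hH, ← hg, ← hh]
    exact hAε.mu_regularizedKernel_le g h I

end KernelNet

/-- the kernel net `H_ε(x,y) = (L_ε(ψ_{ε,y}) ∗ φ_ε)(x)` associated to a
moderate net of linear maps is well defined and belongs to `E_τ(ℝ^{m+n})`. -/
theorem stmt13 (m n : ℕ) (hm : 1 ≤ m) (hn : 1 ≤ n)
    (L : ℝ → SchwartzMap (Fin n → ℝ) ℂ →ₗ[ℂ] ((Fin m → ℝ) → ℂ))
    (hL : ModerateNetMaps m n (fun ε => ⇑(L ε)))
    (hcont : ∀ ε ∈ Set.Ioc (0:ℝ) 1, ContinuousIntoOM m n ⇑(L ε))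
    (ψ : SchwartzMap (Fin n → ℝ) ℂ) (hψ : IsMollifier ψ)
    (φ : SchwartzMap (Fin m → ℝ) ℂ) (hφ : IsMollifier φ)
    (Ψ : ℝ → (Fin n → ℝ) → SchwartzMap (Fin n → ℝ) ℂ)
    (hΨ : ∀ ε ∈ Set.Ioc (0:ℝ) 1, ∀ y v, Ψ ε y v = scaled ⇑ψ ε (y - v)) :
    (∀ ε ∈ Set.Ioc (0:ℝ) 1, ∀ (x : Fin m → ℝ) (y : Fin n → ℝ),
      MeasureTheory.Integrable (fun u : Fin m → ℝ => L ε (Ψ ε y) (x - u) * scaled ⇑φ ε u)) ∧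
    IsEtauNet (fun ε (z : (Fin m → ℝ) × (Fin n → ℝ)) =>
      ∫ u : Fin m → ℝ, L ε (Ψ ε z.2) (z.1 - u) * scaled ⇑φ ε u) :=
  stmt13_general volume (L := fun ε => (L ε).restrictScalars ℝ)
    (fun ε hε => (hcont ε hε).exists_hasGrowthBound fun f => (hL.1 ε hε f).1.continuous)
    hL.exists_hasGrowthBound (isESNet_scaled ψ) (isESNet_scaled φ) hΨ
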